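/- Assume q ≡ 1 (mod 4), l > 2 even, and 1 ≤ d ≤ l − 1 with gcd(l, d) = 1 and d odd. Let ω ∈ F = GF(q^(2l)) be nonzero with ω + ω^(q^l) = 0 and set β = ω^(−1); then ω (and hence β) is a nonsquare in F. Let ξ ∈ 𝔽_{q²} be nonzero with ξ^q + ξ = 0, and define L'(x) = ξ^((q−3)/2)·(x + x^(q^l)) + ξ^(−1)·(x − x^(q^l))^(q^(l−d)) and N'(x) = x + ξ^((q−1)/2)·x^(q^l). Then L' and N' are additive (𝔽_p-linear) bijections of F, the element −ξ^(q^l+1) is a nonsquare in 𝔽_q, and L'((ξ·x^(q^l)) ∗_{(d,β)} y) = N'(x) ∗_{(l−d,β)} N'(y) for all x, y ∈ F. -/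

import Mathlib

/-!
Write `x̄ = x^(q^l)`, `σ = q^d`, `τ = q^(l-d)` and `c = ξ^((q-1)/2)`. From `ξ^q = -ξ` the power map
`x ↦ x^(q^n)` sends `ξ` to `(-1)^n ξ`, so `ξ̄ = ξ` while `ξ^τ = ξ^σ = -ξ`. Moreover `c² = -1`, and `c`
is fixed by every `x ↦ x^(q^n)` because `(q-1)/2` is even.

Since `βω = 1` and `β̄ = -β`, the multiplication becomes
`x ∗_{(e,β)} y = (x̄y + xȳ) + (A - Ā)` with `A = x^(q^e) y + x y^(q^e)`: a bar-invariant part plus a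
bar-anti-invariant part. The map `L'` treats the two parts separately, and `(x^σ)^τ = x̄` turns the
exponent `d` into `l - d`; both sides of the isotopism equal `2c(xy + x̄ȳ) + 2(B - B̄)` with
`B = x^τ y + x y^τ`.

Bijectivity reduces to triviality of the kernels, which follows by applying the bar map to
`L' x = 0` or `N' x = 0`. If `ω = w²`, then `t = w̄/w` satisfies `t² = -1`, hence `t̄ = t` as
`q^l ≡ 1 (mod 4)`, and the bar of `w̄` is `t²w = -w`, contradicting that bar is an involution.
Finally `-ξ^(q^l+1) = -ξ² = (cξ)²`, whose square roots `±cξ` are negated by `x ↦ x^q`, hence lie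
outside `𝔽_q`.
-/

/-- In characteristic `p` with `q = p^h`, the map `x ↦ x^(q^n)` as a ring homomorphism. -/
def qFrob (F : Type*) [Field F] (p h n : ℕ) [ExpChar F p] : F →+* F :=
  iterateFrobenius F p (h * n)

lemma qFrob_apply {F : Type*} [Field F] (p h n : ℕ) [ExpChar F p] (x : F) :
    x ^ (p ^ h) ^ n = qFrob F p h n x := by
  rw [qFrob, iterateFrobenius_def, pow_mul]

lemma qFrob_qFrob {F : Type*} [Field F] (p h m n : ℕ) [ExpChar F p] (x : F) :
    qFrob F p h m (qFrob F p h n x) = qFrob F p h (m + n) x := by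
  simp only [← qFrob_apply]
  rw [← pow_mul, ← pow_add, add_comm]

/-- If `x ↦ x^q` negates an element, its iterates alternate the sign. -/
lemma qFrob_of_neg {F : Type*} [Field F] (p h n : ℕ) [ExpChar F p] (x : F)
    (hx : x ^ p ^ h = -x) : qFrob F p h n x = (-1) ^ n * x := by
  induction n with
  | zero => simp [← qFrob_apply]
  | succ n ih =>
    have h1 : qFrob F p h 1 x = -x := by rw [← qFrob_apply, pow_one, hx]
    rw [← qFrob_qFrob, h1, map_neg, ih]
    ring

/-- An additive endomorphism of a finite group is bijective once its kernel is trivial. -/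
lemma bijective_of_additive {F : Type*} [Field F] [Finite F] (f : F → F)
    (hadd : ∀ x y, f (x + y) = f x + f y) (hker : ∀ x, f x = 0 → x = 0) :
    Function.Bijective f := by
  rw [← Finite.injective_iff_bijective]
  exact (injective_iff_map_eq_zero (AddMonoidHom.mk' f hadd)).2 hker


/-- The Budaghyan–Helleseth multiplication `x ∗_{(e,γ)} y` on `F = GF(q^(2l))`,
relative to a fixed `ω` with `ω + ω^(q^l) = 0`. -/
def bhMul {F : Type*} [Field F] (q l e : ℕ) (γ ω x y : F) : F :=
  x ^ q ^ l * y + x * y ^ q ^ l +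
    (γ * (x ^ q ^ e * y + x * y ^ q ^ e) +
      γ ^ q ^ l * (x ^ q ^ e * y + x * y ^ q ^ e) ^ q ^ l) * ω

/-- Assume q ≡ 1 (mod 4), l > 2 even, and 1 ≤ d ≤ l − 1 with
gcd(l, d) = 1 and d odd. Let ω ∈ F = GF(q^(2l)) be nonzero with ω + ω^(q^l) = 0 and
set β = ω⁻¹; then ω (and hence β) is a nonsquare in F. Let ξ ∈ 𝔽_{q²} be nonzero with
ξ^q + ξ = 0, and define
L'(x) = ξ^((q−3)/2)·(x + x^(q^l)) + ξ⁻¹·(x − x^(q^l))^(q^(l−d)) and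
N'(x) = x + ξ^((q−1)/2)·x^(q^l). Then L' and N' are additive (𝔽_p-linear) bijections
of F, the element −ξ^(q^l+1) is a nonsquare in 𝔽_q, and
L'((ξ·x^(q^l)) ∗_{(d,β)} y) = N'(x) ∗_{(l−d,β)} N'(y) for all x, y ∈ F. -/
theorem bh_explicit_isotopism (p h l d q : ℕ) (hp : p.Prime) (hpodd : Odd p)
    (hh : 0 < h) (hq : q = p ^ h) (hq4 : q % 4 = 1) (hl : 2 < l) (hleven : Even l)
    (hd1 : 1 ≤ d) (hd2 : d ≤ l - 1) (hgd : Nat.gcd l d = 1) (hdodd : Odd d)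
    (F : Type*) [Field F] [Fintype F] (hcard : Fintype.card F = q ^ (2 * l))
    (ω : F) (hω : ω ≠ 0) (hωtr : ω + ω ^ q ^ l = 0)
    (β : F) (hβ : β = ω⁻¹)
    (ξ : F) (hξ0 : ξ ≠ 0) (hξq2 : ξ ^ q ^ 2 = ξ) (hξtr : ξ ^ q + ξ = 0) :
    let L' : F → F := fun x =>
      ξ ^ ((q - 3) / 2) * (x + x ^ q ^ l) + ξ⁻¹ * (x - x ^ q ^ l) ^ q ^ (l - d)
    let N' : F → F := fun x => x + ξ ^ ((q - 1) / 2) * x ^ q ^ l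
    (∀ w : F, ω ≠ w ^ 2) ∧ (∀ w : F, β ≠ w ^ 2) ∧
      Function.Bijective L' ∧ (∀ x y : F, L' (x + y) = L' x + L' y) ∧
      Function.Bijective N' ∧ (∀ x y : F, N' (x + y) = N' x + N' y) ∧
      (∀ w : F, w ^ q = w → -ξ ^ (q ^ l + 1) ≠ w ^ 2) ∧
      ∀ x y : F, L' (bhMul q l d β ω (ξ * x ^ q ^ l) y) =
        bhMul q l (l - d) β ω (N' x) (N' y) := by
  intro L' N'
  have : Fact p.Prime := ⟨hp⟩
  have : CharP F p := charP_of_card_eq_prime_pow (f := h * (2 * l)) (by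
    rw [hcard, hq, ← pow_mul])
  have : ExpChar F p := ExpChar.prime hp
  have h2 : (2 : F) ≠ 0 := Ring.two_ne_zero (by
    rw [ringChar.eq F p]; rintro rfl; exact absurd hpodd (by decide))
  set q4 : ℕ := q / 4 with hq4'
  have hq3 : (q - 1) / 2 = (q - 3) / 2 + 1 := by
    have : 1 < q := hq ▸ Nat.one_lt_pow hh.ne' hp.one_lt
    omega
  have hqe : (q - 1) / 2 = 2 * q4 := by omega
  have hq1 : q = 2 * ((q - 1) / 2) + 1 := by omega
  have hξq : ξ ^ q = -ξ := eq_neg_of_add_eq_zero_left hξtr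
  -- The element `c = ξ^((q-1)/2)` is a square root of `-1`.
  obtain ⟨c, hc⟩ : ∃ c, c = ξ ^ ((q - 1) / 2) := ⟨_, rfl⟩
  have hcc : c ^ 2 = -1 := by
    apply mul_right_cancel₀ hξ0
    rw [hc, ← pow_mul, ← pow_succ, mul_comm, ← hq1, hξq]; ring
  have hc3 : ξ ^ ((q - 3) / 2) = c * ξ⁻¹ := by
    rw [hc, hq3, pow_succ, mul_assoc, mul_inv_cancel₀ hξ0, mul_one]
  have hl4 : q ^ l % 4 = 1 := by simp [Nat.pow_mod, hq4]
  have hξn (n : ℕ) : qFrob F p h n ξ = (-1) ^ n * ξ :=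
    qFrob_of_neg p h n ξ (by rw [← hq]; exact hξq)
  have hcn (n : ℕ) : qFrob F p h n c = c := by
    rw [hc, map_pow, hξn, mul_pow, hqe, ← pow_mul,
      Even.neg_one_pow ⟨n * q4, by ring⟩, one_mul]
  have hbb (x : F) : qFrob F p h l (qFrob F p h l x) = x := by
    rw [qFrob_qFrob, ← qFrob_apply, ← hq, ← two_mul, ← hcard, FiniteField.pow_card]
  have hbξ : qFrob F p h l ξ = ξ := by rw [hξn, hleven.neg_one_pow, one_mul]
  have hσξ : qFrob F p h d ξ = -ξ := by rw [hξn, hdodd.neg_one_pow]; ring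
  have hτodd : Odd (l - d) := Nat.Even.sub_odd (by omega) hleven hdodd
  have hτξ : qFrob F p h (l - d) ξ = -ξ := by rw [hξn, hτodd.neg_one_pow]; ring
  have hτσ (x : F) : qFrob F p h (l - d) (qFrob F p h d x) = qFrob F p h l x := by
    rw [qFrob_qFrob]; congr 2; omega
  have hτb (x : F) : qFrob F p h (l - d) (qFrob F p h l x) =
      qFrob F p h l (qFrob F p h (l - d) x) := by
    rw [qFrob_qFrob, qFrob_qFrob, add_comm]
  have hσb (x : F) : qFrob F p h d (qFrob F p h l x) =
      qFrob F p h l (qFrob F p h d x) := by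
    rw [qFrob_qFrob, qFrob_qFrob, add_comm]
  have hbω : qFrob F p h l ω = -ω := by
    rw [← qFrob_apply, ← hq]; exact eq_neg_of_add_eq_zero_right hωtr
  have hbβ : qFrob F p h l β = -β := by rw [hβ, map_inv₀, hbω, inv_neg]
  have hβω : β * ω = 1 := by rw [hβ, inv_mul_cancel₀ hω]
  have hωns : ∀ w : F, ω ≠ w ^ 2 := by
    intro w hw
    have hw0 : w ≠ 0 := by rintro rfl; exact hω (by rw [hw]; ring)
    obtain ⟨t, ht⟩ : ∃ t, t = qFrob F p h l w * w⁻¹ := ⟨_, rfl⟩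
    have hwt : qFrob F p h l w = t * w := by
      rw [ht, mul_assoc, inv_mul_cancel₀ hw0, mul_one]
    have ht2 : t ^ 2 = -1 := by
      have : (qFrob F p h l w) ^ 2 = -w ^ 2 := by rw [← map_pow, ← hw, hbω]
      apply mul_right_cancel₀ (pow_ne_zero 2 hw0)
      rw [hwt] at this
      linear_combination this
    have htb : qFrob F p h l t = t := by
      have hexp : q ^ l = 2 * (2 * (q ^ l / 4)) + 1 := by omega
      rw [← qFrob_apply, ← hq, hexp, pow_succ, pow_mul, ht2, pow_mul]
      simp
    have hww := hbb w
    rw [hwt, map_mul, htb, hwt] at hww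
    have : 2 * w = 0 := by linear_combination -hww + w * ht2
    exact mul_ne_zero h2 hw0 this
  have hLadd : ∀ x y : F, L' (x + y) = L' x + L' y := by
    intro x y
    simp only [L', hq, qFrob_apply, map_add, map_sub]
    ring
  have hNadd : ∀ x y : F, N' (x + y) = N' x + N' y := by
    intro x y
    simp only [N', hq, qFrob_apply, map_add]
    ring
  refine ⟨hωns, ?_, bijective_of_additive _ hLadd ?_, hLadd,
    bijective_of_additive _ hNadd ?_, hNadd, ?_, ?_⟩
  · intro w hw
    apply hωns w⁻¹
    rw [inv_pow, ← hw, hβ, inv_inv]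
  · intro x hx
    simp only [L', hc3] at hx
    simp only [hq, qFrob_apply] at hx
    have hx' := congrArg (qFrob F p h l) hx
    simp only [map_add, map_sub, map_mul, map_inv₀, map_zero, hcn, hbξ, hτb, hbb] at hx hx'
    have hc0 : c ≠ 0 := by rintro rfl; norm_num at hcc
    have e1 : (2 * (c * ξ⁻¹)) * (x + qFrob F p h l x) = 0 := by linear_combination hx + hx'
    have e2 : (2 * ξ⁻¹) * qFrob F p h (l - d) (x - qFrob F p h l x) = 0 := by
      rw [map_sub, hτb]; linear_combination hx - hx'
    have hξi := inv_ne_zero hξ0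
    have e1' := (mul_eq_zero.1 e1).resolve_left (mul_ne_zero h2 (mul_ne_zero hc0 hξi))
    have e2' := (mul_eq_zero.1 e2).resolve_left (mul_ne_zero h2 hξi)
    rw [map_eq_zero] at e2'
    have : 2 * x = 0 := by linear_combination e1' + e2'
    exact (mul_eq_zero.1 this).resolve_left h2
  · intro x hx
    simp only [N', ← hc] at hx
    simp only [hq, qFrob_apply] at hx
    have hx' := congrArg (qFrob F p h l) hx
    simp only [map_add, map_mul, map_zero, hcn, hbb] at hx'
    have : 2 * x = 0 := by linear_combination hx - c * hx' + x * hcc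
    exact (mul_eq_zero.1 this).resolve_left h2
  · intro w hw hsq
    have e : (c * ξ - w) * (c * ξ + w) = 0 := by
      rw [pow_succ, hq, qFrob_apply, hbξ] at hsq
      linear_combination ξ ^ 2 * hcc + hsq
    have h1 (x : F) : x ^ q = qFrob F p h 1 x := by rw [← qFrob_apply, pow_one, hq]
    rw [h1] at hw
    have hξ1 := hξn 1
    have hmain : c * ξ = 0 := by
      rcases mul_eq_zero.1 e with e | e
      · have e' := congrArg (qFrob F p h 1) e
        simp only [map_sub, map_mul, map_zero, hcn, hξ1, hw] at e'
        have : 2 * (c * ξ) = 0 := by linear_combination e - e'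
        exact (mul_eq_zero.1 this).resolve_left h2
      · have e' := congrArg (qFrob F p h 1) e
        simp only [map_add, map_mul, map_zero, hcn, hξ1, hw] at e'
        have : 2 * (c * ξ) = 0 := by linear_combination e - e'
        exact (mul_eq_zero.1 this).resolve_left h2
    have hc0 : c ≠ 0 := by rintro rfl; norm_num at hcc
    exact mul_ne_zero hc0 hξ0 hmain
  · -- With `βω = 1` and `β̄ = -β` the product loses its dependence on `β` and `ω`.
    have hmul (e : ℕ) (x y : F) : bhMul q l e β ω x y =
        qFrob F p h l x * y + x * qFrob F p h l y +
          ((qFrob F p h e x * y + x * qFrob F p h e y) -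
            qFrob F p h l (qFrob F p h e x * y + x * qFrob F p h e y)) := by
      simp only [bhMul, hq, qFrob_apply, hbβ]
      linear_combination ((qFrob F p h e x * y + x * qFrob F p h e y) -
            qFrob F p h l (qFrob F p h e x * y + x * qFrob F p h e y)) * hβω
    intro x y
    rw [hmul, hmul]
    simp only [L', N', hc3, ← hc]
    simp only [hq, qFrob_apply, map_add, map_sub, map_mul, map_neg, hcn, hbξ, hσξ, hτξ,
      hτb, hσb, hτσ, hbb]
    generalize qFrob F p h (l - d) x = xτ
    generalize qFrob F p h (l - d) y = yτ
    -- Both sides are `2c(xy + x̄ȳ) + 2(B - B̄)`, modulo `c² = -1`.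
    field_simp
    ring_nf
    simp only [hcc]
    ring
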